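/- Holomorphy in the chart r0: fix t, s ∈ ℂ with t, s ∉ {0,1} and t ≠ s; then there exists a polynomial P in four variables with complex coefficients such that for all complex (q1,p1,q2,p2) with q1 ≠ 0, p2 ≠ 0, q2 ∉ {0,1,t,s} and q2 + 1/q1 ∉ {0,1,t,s}, one has H1(ψ(q1,p1,q2,p2), t, s) = P(q1, p1, −(q2·p2 − κ0)·p2, 1/p2). That is, the polynomial Hamiltonian obtained from H1 by φ1 becomes again polynomial in the coordinates (x0,y0,z0,w0) = (q1, p1, −(q2p2−κ0)p2, 1/p2). -/

import Mathlib

/-- The quadratic form `B(q,p)` appearing in the Garnier Hamiltonian, with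
`κ = ((κ0+κ1+θ1+θ2-1)² - κ∞²)/4`. -/
noncomputable def garnierB (κ0 κ1 κinf θ1 θ2 t s q p : ℂ) : ℂ :=
  p ^ 2 + (((κ0 + κ1 + θ1 + θ2 - 1) ^ 2 - κinf ^ 2) / 4) / (q * (q - 1)) -
    ((θ1 - 1) / (q - t) + θ2 / (q - s) + κ0 / q + κ1 / (q - 1)) * p

/-- The Hamiltonian `H1` of the Garnier system in two variables. -/
noncomputable def garnierH1 (κ0 κ1 κinf θ1 θ2 q1 p1 q2 p2 t s : ℂ) : ℂ :=
  -(q1 * (q1 - 1) * (q1 - t) * (q1 - s) * (q2 - t)) /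
      ((q1 - q2) * t * (t - 1) * (t - s)) *
      garnierB κ0 κ1 κinf θ1 θ2 t s q1 p1 -
    (q2 * (q2 - 1) * (q2 - t) * (q2 - s) * (q1 - t)) /
      ((q2 - q1) * t * (t - 1) * (t - s)) *
      garnierB κ0 κ1 κinf θ1 θ2 t s q2 p2

/-- The inverse ψ of the symplectic transformation φ1, written componentwise:
`ψ(Q1,P1,Q2,P2) = (Q2 + 1/Q1, Q1(c - P1·Q1), Q2, P2 - Q1(c - P1·Q1))`. -/
noncomputable def psi (c : ℂ) : ℂ × ℂ × ℂ × ℂ → ℂ × ℂ × ℂ × ℂ :=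
  fun (Q1, P1, Q2, P2) =>
    (Q2 + 1 / Q1, Q1 * (c - P1 * Q1), Q2, P2 - Q1 * (c - P1 * Q1))

/-- `H1` evaluated on a tuple of canonical variables. -/
noncomputable def garnierH1' (κ0 κ1 κinf θ1 θ2 : ℂ) (v : ℂ × ℂ × ℂ × ℂ)
    (t s : ℂ) : ℂ :=
  garnierH1 κ0 κ1 κinf θ1 θ2 v.1 v.2.1 v.2.2.1 v.2.2.2 t s

/-!
Multiplying `B(q, p)` by `q (q - 1) (q - t) (q - s)` clears its denominators and gives a quadratic
Hamiltonian `F(q, p) = f(q) p² - g(q) p + h(q)` with polynomial coefficients. Since `ψ` makes the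
difference of the two positions equal to `1 / x`, the Hamiltonian `H1 ∘ ψ` is, up to the constant
factor `t (t - 1) (t - s)`, equal to
`(x (q - t) + 1) F(q, p - u) - (q - t) x F(q + 1 / x, u)` with `u = x (c - y x)`.

* `x F(q + 1 / x, x (c - y x))` is polynomial in `(x, y, q)`: after homogenization, `x² F` is
  polynomial and its value at `x = 0` is the indicial polynomial of `F` at `q = ∞`, evaluated at
  its root `c`.
* `F(q, p - u)` is polynomial in `(-(q p - κ0) p, 1 / p, u)`: so are `q p` and `q`, and the residue
  condition `g(0) = κ0 f'(0)` groups the remaining terms of `F` into a multiple of `(q p - κ0) p`.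
-/

open Polynomial

theorem eval_polynomial_aeval {R σ : Type*} [CommSemiring R] (v : σ → R) (r : MvPolynomial σ R)
    (f : R[X]) : MvPolynomial.eval v (aeval r f) = f.eval (MvPolynomial.eval v r) :=
  (aeval_algHom_apply (MvPolynomial.aeval v) r f).symm

theorem eval_bind₁_fin_three {R σ : Type*} [CommSemiring R] (v : σ → R) (a b c : MvPolynomial σ R)
    (P : MvPolynomial (Fin 3) R) :
    MvPolynomial.eval v (MvPolynomial.bind₁ ![a, b, c] P) =
      MvPolynomial.eval
        ![MvPolynomial.eval v a, MvPolynomial.eval v b, MvPolynomial.eval v c] P := by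
  have hv : (fun i => MvPolynomial.eval v (![a, b, c] i)) =
      ![MvPolynomial.eval v a, MvPolynomial.eval v b, MvPolynomial.eval v c] := by
    ext i
    fin_cases i <;> rfl
  rw [← hv]
  exact MvPolynomial.aeval_bind₁ v ![a, b, c] P

section EvalAtInfinity

variable {R A B : Type*} [CommRing R] [CommRing A] [Algebra R A] [CommRing B] [Algebra R B]

/-- The value `xⁿ f(q + 1 / x)` of a polynomial `f` of degree at most `n` near infinity, encoded
through the homogenization of `f` so that it makes sense for every `x`, including `x = 0`. -/
noncomputable def evalAtInfinity (n : ℕ) (f : R[X]) (q x : A) : A :=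
  MvPolynomial.aeval ![1 + q * x, x] (f.homogenize n)

theorem map_evalAtInfinity (φ : A →ₐ[R] B) (n : ℕ) (f : R[X]) (q x : A) :
    φ (evalAtInfinity n f q x) = evalAtInfinity n f (φ q) (φ x) := by
  have hφ : (fun i => φ (![1 + q * x, x] i)) = ![1 + φ q * φ x, φ x] := by
    ext i
    fin_cases i <;> simp
  rw [evalAtInfinity, ← AlgHom.comp_apply, MvPolynomial.comp_aeval, hφ, evalAtInfinity]

theorem evalAtInfinity_eq_pow_mul_eval {K : Type*} [Field K] {n : ℕ} {f : K[X]}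
    (hf : f.natDegree ≤ n) (q : K) {x : K} (hx : x ≠ 0) :
    evalAtInfinity n f q x = x ^ n * f.eval (q + 1 / x) := by
  have hpoint : (1 + q * x) / x = q + 1 / x := by
    field_simp
    ring
  rw [evalAtInfinity, MvPolynomial.aeval_eq_eval, eval_homogenize hf _ hx,
    mul_comm, Matrix.cons_val_one, Matrix.cons_val_zero, Matrix.cons_val_zero, hpoint]

theorem evalAtInfinity_eq_sum (n : ℕ) (f : R[X]) (q x : A) :
    evalAtInfinity n f q x =
      ∑ i ∈ Finset.range n, algebraMap R A (f.coeff i) * ((1 + q * x) ^ i * x ^ (n - i)) +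
        algebraMap R A (f.coeff n) * (1 + q * x) ^ n := by
  simp [evalAtInfinity, homogenize, Finset.Nat.sum_antidiagonal_eq_sum_range_succ_mk,
    Finset.sum_range_succ, MvPolynomial.aeval_monomial, Finsupp.prod_fintype]

theorem dvd_evalAtInfinity_sub_coeff (n : ℕ) (f : R[X]) (q x : A) :
    x ∣ evalAtInfinity n f q x - algebraMap R A (f.coeff n) := by
  have hpow : x ∣ (1 + q * x) ^ n - 1 := by
    have hsub : (1 + q * x) - 1 ∣ (1 + q * x) ^ n - 1 := sub_one_dvd_pow_sub_one _ n
    rw [add_sub_cancel_left] at hsub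
    exact (dvd_mul_left x q).trans hsub
  rw [evalAtInfinity_eq_sum, add_sub_assoc, ← mul_sub_one]
  refine dvd_add (Finset.dvd_sum fun i hi => ?_) (hpow.mul_left _)
  have hi : n - i ≠ 0 := Nat.sub_ne_zero_of_lt (Finset.mem_range.mp hi)
  exact ((dvd_pow_self x hi).mul_left _).mul_left _

theorem dvd_quadratic_evalAtInfinity_of_indicial {k m n : ℕ} {f g h : R[X]} {c : R}
    (hc : f.coeff k * c ^ 2 - g.coeff m * c + h.coeff n = 0) (q x y : A) :
    x ∣ evalAtInfinity k f q x * (algebraMap R A c - y * x) ^ 2 -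
      evalAtInfinity m g q x * (algebraMap R A c - y * x) + evalAtInfinity n h q x := by
  have mk_evalAtInfinity (d : ℕ) (r : R[X]) :
      Ideal.Quotient.mk (Ideal.span {x}) (evalAtInfinity d r q x) =
        Ideal.Quotient.mk (Ideal.span {x}) (algebraMap R A (r.coeff d)) :=
    Ideal.Quotient.eq.mpr (Ideal.mem_span_singleton.mpr (dvd_evalAtInfinity_sub_coeff d r q x))
  have mk_x : Ideal.Quotient.mk (Ideal.span {x}) x = 0 :=
    Ideal.Quotient.eq_zero_iff_mem.mpr (Ideal.mem_span_singleton_self x)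
  rw [← Ideal.mem_span_singleton, ← Ideal.Quotient.eq_zero_iff_mem]
  simp only [map_add, map_sub, map_mul, map_pow, mk_evalAtInfinity, mk_x, mul_zero, sub_zero]
  simp only [← map_pow, ← map_mul, ← map_sub, ← map_add, hc, map_zero]

end EvalAtInfinity

section QuadraticHamiltonian

/-- The Hamiltonian `f(q) p² - g(q) p + h(q)`, quadratic in the momentum `p`, whose coefficients
are polynomials in the position `q`. -/
def quadraticHamiltonian {R : Type*} [CommRing R] (f g h : R[X]) (q p : R) : R :=
  f.eval q * p ^ 2 - g.eval q * p + h.eval q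

variable {K : Type*} [Field K] {f g h : K[X]}

theorem exists_eval_eq_quadraticHamiltonian_of_indicial {n : ℕ} {c : K}
    (hf : f.natDegree ≤ n + 3) (hg : g.natDegree ≤ n + 2) (hh : h.natDegree ≤ n + 1)
    (hc : f.coeff (n + 3) * c ^ 2 - g.coeff (n + 2) * c + h.coeff (n + 1) = 0) :
    ∃ P : MvPolynomial (Fin 3) K, ∀ x y q : K, x ≠ 0 →
      MvPolynomial.eval ![x, y, q] P =
        x ^ n * quadraticHamiltonian f g h (q + 1 / x) (x * (c - y * x)) := by
  obtain ⟨P, hP⟩ := dvd_quadratic_evalAtInfinity_of_indicial hc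
    (.X 2 : MvPolynomial (Fin 3) K) (.X 0) (.X 1)
  refine ⟨P, fun x y q hx => mul_left_cancel₀ hx ?_⟩
  have hP_eval := congrArg (MvPolynomial.aeval ![x, y, q]) hP
  simp only [map_add, map_sub, map_mul, map_pow, map_evalAtInfinity, AlgHom.commutes,
    MvPolynomial.aeval_X, Algebra.algebraMap_self, RingHom.id_apply, Matrix.cons_val,
    evalAtInfinity_eq_pow_mul_eval hf q hx, evalAtInfinity_eq_pow_mul_eval hg q hx,
    evalAtInfinity_eq_pow_mul_eval hh q hx, MvPolynomial.aeval_eq_eval] at hP_eval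
  rw [← hP_eval, quadraticHamiltonian]
  ring

theorem exists_eq_X_sub_C_mul_of_residue {R : Type*} [CommRing R] {f g : R[X]} {a κ : R}
    (hf : f.IsRoot a) (hg : g.eval a = κ * f.derivative.eval a) :
    ∃ f₁ g₁ : R[X], f = (X - C a) * f₁ ∧ g = (X - C a) * g₁ + C κ * f₁ := by
  obtain ⟨f₁, rfl⟩ := dvd_iff_isRoot.mpr hf
  obtain ⟨g₁, hg₁⟩ : X - C a ∣ g - C κ * f₁ := by
    rw [dvd_iff_isRoot]
    simp [IsRoot, hg]
  exact ⟨f₁, g₁, rfl, sub_eq_iff_eq_add.mp hg₁⟩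

theorem exists_eval_eq_quadraticHamiltonian_of_residue {a κ : K} (hf : f.IsRoot a)
    (hg : g.eval a = κ * f.derivative.eval a) :
    ∃ P : MvPolynomial (Fin 3) K, ∀ q p u : K, p ≠ 0 →
      MvPolynomial.eval ![-((q - a) * p - κ) * p, 1 / p, u] P =
        quadraticHamiltonian f g h q (p - u) := by
  obtain ⟨f₁, g₁, rfl, rfl⟩ := exists_eq_X_sub_C_mul_of_residue hf hg
  let z : MvPolynomial (Fin 3) K := .X 0
  let w : MvPolynomial (Fin 3) K := .X 1
  let u : MvPolynomial (Fin 3) K := .X 2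
  -- In the chart, `(q - a) p = κ - z w` and `q = a + w (κ - z w)`.
  let m : MvPolynomial (Fin 3) K := .C κ - z * w
  let q : MvPolynomial (Fin 3) K := .C a + w * m
  refine ⟨-aeval q f₁ * (z + 2 * m * u - w * m * u ^ 2 - .C κ * u) -
    aeval q g₁ * (m - w * m * u) + aeval q h, fun q₀ p₀ u₀ hp => ?_⟩
  set v : Fin 3 → K := ![-((q₀ - a) * p₀ - κ) * p₀, 1 / p₀, u₀]
  have hz : MvPolynomial.eval v z = -((q₀ - a) * p₀ - κ) * p₀ := MvPolynomial.eval_X 0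
  have hw : MvPolynomial.eval v w = 1 / p₀ := MvPolynomial.eval_X 1
  have hu : MvPolynomial.eval v u = u₀ := MvPolynomial.eval_X 2
  have hm : MvPolynomial.eval v m = (q₀ - a) * p₀ := by
    rw [map_sub, map_mul, MvPolynomial.eval_C, hz, hw]
    field_simp
    ring
  have hq : MvPolynomial.eval v q = q₀ := by
    rw [map_add, map_mul, MvPolynomial.eval_C, hm, hw]
    field_simp
    ring
  simp only [quadraticHamiltonian, map_add, map_sub, map_neg, map_mul, map_pow, map_ofNat,
    MvPolynomial.eval_C, eval_polynomial_aeval, hz, hw, hu, hm, hq, eval_add, eval_sub, eval_mul,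
    eval_X, eval_C]
  field_simp
  ring

end QuadraticHamiltonian

section Garnier

section Coefficients

variable {R : Type*} [CommRing R]

/-- The polynomial `q (q - 1) (q - t) (q - s)` with which the denominators of `garnierB` are
cleared. -/
noncomputable def garnierQuartic (t s : R) : R[X] :=
  X * (X - 1) * (X - C t) * (X - C s)

/-- The coefficient of `-p` in `garnierB` after clearing denominators. -/
noncomputable def garnierCubic (κ0 κ1 θ1 θ2 t s : R) : R[X] :=
  C (θ1 - 1) * (X * (X - 1) * (X - C s)) + C θ2 * (X * (X - 1) * (X - C t)) +
    C κ0 * ((X - 1) * (X - C t) * (X - C s)) + C κ1 * (X * (X - C t) * (X - C s))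

/-- The coefficient of `p ^ 0` in `garnierB` after clearing denominators. -/
noncomputable def garnierQuadratic (κ t s : R) : R[X] :=
  C κ * ((X - C t) * (X - C s))

variable (κ κ0 κ1 θ1 θ2 t s : R)

theorem natDegree_garnierQuartic_le : (garnierQuartic t s).natDegree ≤ 4 := by
  unfold garnierQuartic
  compute_degree

theorem natDegree_garnierCubic_le : (garnierCubic κ0 κ1 θ1 θ2 t s).natDegree ≤ 3 := by
  unfold garnierCubic
  compute_degree

theorem natDegree_garnierQuadratic_le : (garnierQuadratic κ t s).natDegree ≤ 2 := by
  unfold garnierQuadratic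
  compute_degree

theorem coeff_four_garnierQuartic : (garnierQuartic t s).coeff 4 = 1 := by
  unfold garnierQuartic
  compute_degree!

theorem coeff_three_garnierCubic :
    (garnierCubic κ0 κ1 θ1 θ2 t s).coeff 3 = θ1 - 1 + θ2 + κ0 + κ1 := by
  unfold garnierCubic
  compute_degree!

theorem coeff_two_garnierQuadratic : (garnierQuadratic κ t s).coeff 2 = κ := by
  unfold garnierQuadratic
  compute_degree!

theorem isRoot_zero_garnierQuartic : (garnierQuartic t s).IsRoot 0 := by
  simp [garnierQuartic]

theorem eval_zero_garnierCubic :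
    (garnierCubic κ0 κ1 θ1 θ2 t s).eval 0 = κ0 * (garnierQuartic t s).derivative.eval 0 := by
  simp [garnierCubic, garnierQuartic]

end Coefficients

/-- The Hamiltonian `q (q - 1) (q - t) (q - s) B(q, p)`, extended to the zeros of the prefactor. -/
noncomputable def garnierF (κ0 κ1 κinf θ1 θ2 t s : ℂ) : ℂ → ℂ → ℂ :=
  quadraticHamiltonian (garnierQuartic t s) (garnierCubic κ0 κ1 θ1 θ2 t s)
    (garnierQuadratic (((κ0 + κ1 + θ1 + θ2 - 1) ^ 2 - κinf ^ 2) / 4) t s)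

variable (κ0 κ1 κinf θ1 θ2 t s : ℂ)

theorem mul_garnierB_eq_garnierF {q : ℂ} (p : ℂ)
    (h0 : q ≠ 0) (h1 : q ≠ 1) (ht : q ≠ t) (hs : q ≠ s) :
    q * (q - 1) * (q - t) * (q - s) * garnierB κ0 κ1 κinf θ1 θ2 t s q p =
      garnierF κ0 κ1 κinf θ1 θ2 t s q p := by
  have h1' : q - 1 ≠ 0 := sub_ne_zero.mpr h1
  have ht' : q - t ≠ 0 := sub_ne_zero.mpr ht
  have hs' : q - s ≠ 0 := sub_ne_zero.mpr hs
  simp only [garnierB, garnierF, quadraticHamiltonian, garnierQuartic, garnierCubic,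
    garnierQuadratic, eval_add, eval_sub, eval_mul, eval_X, eval_C, eval_one]
  field_simp
  ring

theorem garnierH1_eq_garnierF {q₁ q₂ : ℂ} (p₁ p₂ : ℂ)
    (h₁0 : q₁ ≠ 0) (h₁1 : q₁ ≠ 1) (h₁t : q₁ ≠ t) (h₁s : q₁ ≠ s)
    (h₂0 : q₂ ≠ 0) (h₂1 : q₂ ≠ 1) (h₂t : q₂ ≠ t) (h₂s : q₂ ≠ s) :
    garnierH1 κ0 κ1 κinf θ1 θ2 q₁ p₁ q₂ p₂ t s =
      (t * (t - 1) * (t - s))⁻¹ * (q₁ - q₂)⁻¹ *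
        ((q₁ - t) * garnierF κ0 κ1 κinf θ1 θ2 t s q₂ p₂ -
          (q₂ - t) * garnierF κ0 κ1 κinf θ1 θ2 t s q₁ p₁) := by
  rw [garnierH1, ← mul_garnierB_eq_garnierF κ0 κ1 κinf θ1 θ2 t s p₁ h₁0 h₁1 h₁t h₁s,
    ← mul_garnierB_eq_garnierF κ0 κ1 κinf θ1 θ2 t s p₂ h₂0 h₂1 h₂t h₂s, ← neg_sub q₁ q₂]
  simp only [div_eq_mul_inv, mul_inv, inv_neg, neg_mul]
  ring

theorem garnierH1'_psi_eq_garnierF (c y p : ℂ) {x q : ℂ} (hx : x ≠ 0)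
    (h0 : q ≠ 0) (h1 : q ≠ 1) (ht : q ≠ t) (hs : q ≠ s)
    (h0' : q + 1 / x ≠ 0) (h1' : q + 1 / x ≠ 1) (ht' : q + 1 / x ≠ t) (hs' : q + 1 / x ≠ s) :
    garnierH1' κ0 κ1 κinf θ1 θ2 (psi c (x, y, q, p)) t s =
      (t * (t - 1) * (t - s))⁻¹ *
        ((x * (q - t) + 1) * garnierF κ0 κ1 κinf θ1 θ2 t s q (p - x * (c - y * x)) -
          (q - t) * (x * garnierF κ0 κ1 κinf θ1 θ2 t s (q + 1 / x) (x * (c - y * x)))) := by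
  have hdiff : (q + 1 / x - q)⁻¹ = x := by simp
  have hfactor : x * (q + 1 / x - t) = x * (q - t) + 1 := by
    field_simp
    ring
  simp only [garnierH1', psi]
  rw [garnierH1_eq_garnierF _ _ _ _ _ _ _ _ _ h0' h1' ht' hs' h0 h1 ht hs, hdiff, ← hfactor]
  ring

theorem exists_eval_eq_garnierF_infinity :
    ∃ P : MvPolynomial (Fin 3) ℂ, ∀ x y q : ℂ, x ≠ 0 →
      MvPolynomial.eval ![x, y, q] P = x * garnierF κ0 κ1 κinf θ1 θ2 t s (q + 1 / x)
        (x * ((κ0 + κ1 - κinf + θ1 + θ2 - 1) / 2 - y * x)) := by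
  have hindicial : (garnierQuartic t s).coeff 4 * ((κ0 + κ1 - κinf + θ1 + θ2 - 1) / 2) ^ 2 -
      (garnierCubic κ0 κ1 θ1 θ2 t s).coeff 3 * ((κ0 + κ1 - κinf + θ1 + θ2 - 1) / 2) +
      (garnierQuadratic (((κ0 + κ1 + θ1 + θ2 - 1) ^ 2 - κinf ^ 2) / 4) t s).coeff 2 = 0 := by
    rw [coeff_four_garnierQuartic, coeff_three_garnierCubic, coeff_two_garnierQuadratic]
    ring
  simpa only [pow_one, garnierF] using exists_eval_eq_quadraticHamiltonian_of_indicial (n := 1)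
    (natDegree_garnierQuartic_le t s) (natDegree_garnierCubic_le κ0 κ1 θ1 θ2 t s)
    (natDegree_garnierQuadratic_le _ t s) hindicial

theorem exists_eval_eq_garnierF_zero :
    ∃ P : MvPolynomial (Fin 3) ℂ, ∀ q p u : ℂ, p ≠ 0 →
      MvPolynomial.eval ![-(q * p - κ0) * p, 1 / p, u] P =
        garnierF κ0 κ1 κinf θ1 θ2 t s q (p - u) := by
  simpa only [sub_zero, garnierF] using exists_eval_eq_quadraticHamiltonian_of_residue
    (isRoot_zero_garnierQuartic t s) (eval_zero_garnierCubic κ0 κ1 θ1 θ2 t s)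

end Garnier

/-- Holomorphy in the chart `r0`: the polynomial Hamiltonian obtained from `H1`
by φ1 becomes again polynomial in the coordinates
`(x0,y0,z0,w0) = (q1, p1, -(q2·p2 - κ0)·p2, 1/p2)`. -/
theorem garnierH1_chart_r0 (κ0 κ1 κinf θ1 θ2 t s : ℂ)
    (ht0 : t ≠ 0) (ht1 : t ≠ 1) (hs0 : s ≠ 0) (hs1 : s ≠ 1) (hts : t ≠ s) :
    ∃ P : MvPolynomial (Fin 4) ℂ, ∀ q1 p1 q2 p2 : ℂ,
      q1 ≠ 0 → p2 ≠ 0 → q2 ≠ 0 → q2 ≠ 1 → q2 ≠ t → q2 ≠ s →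
      q2 + 1 / q1 ≠ 0 → q2 + 1 / q1 ≠ 1 → q2 + 1 / q1 ≠ t → q2 + 1 / q1 ≠ s →
      garnierH1' κ0 κ1 κinf θ1 θ2
          (psi ((κ0 + κ1 - κinf + θ1 + θ2 - 1) / 2) (q1, p1, q2, p2)) t s =
        MvPolynomial.eval ![q1, p1, -(q2 * p2 - κ0) * p2, 1 / p2] P := by
  obtain ⟨Pinf, hPinf⟩ := exists_eval_eq_garnierF_infinity κ0 κ1 κinf θ1 θ2 t s
  obtain ⟨Pzero, hPzero⟩ := exists_eval_eq_garnierF_zero κ0 κ1 κinf θ1 θ2 t s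
  set c := (κ0 + κ1 - κinf + θ1 + θ2 - 1) / 2
  let x : MvPolynomial (Fin 4) ℂ := .X 0
  let y : MvPolynomial (Fin 4) ℂ := .X 1
  let z : MvPolynomial (Fin 4) ℂ := .X 2
  let w : MvPolynomial (Fin 4) ℂ := .X 3
  let q := w * (.C κ0 - z * w)
  refine ⟨.C (t * (t - 1) * (t - s))⁻¹ *
    ((x * (q - .C t) + 1) * MvPolynomial.bind₁ ![z, w, x * (.C c - y * x)] Pzero -
      (q - .C t) * MvPolynomial.bind₁ ![x, y, q] Pinf), ?_⟩
  intro q1 p1 q2 p2 hq1 hp2 h0 h1 ht hs h0' h1' ht' hs'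
  have hq : 1 / p2 * (κ0 - -(q2 * p2 - κ0) * p2 * (1 / p2)) = q2 := by
    field_simp
    ring
  rw [garnierH1'_psi_eq_garnierF κ0 κ1 κinf θ1 θ2 t s c p1 p2 hq1 h0 h1 ht hs h0' h1' ht' hs',
    ← hPinf q1 p1 q2 hq1, ← hPzero q2 p2 _ hp2]
  simp only [x, y, z, w, q, map_mul, map_sub, map_add, map_one, MvPolynomial.eval_C,
    MvPolynomial.eval_X, eval_bind₁_fin_three, Matrix.cons_val, hq]
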